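/- The 2-periodic Lyness composition map G_{b,a}(x,y) = ((a+y)/x, (a + bx + y)/(xy)) with b = 1/a, a ≠ 0, satisfies G_{1/a,a}^5 = Id if and only if a ∈ {1, (−1+i√3)/2, (−1−i√3)/2}. In the latter two cases b = 1/a = ā and the corresponding recurrence is globally 10-periodic. -/

import Mathlib

/-- the composition Lyness map -/
noncomputable def LyG (a : ℂ) : ℂ × ℂ → ℂ × ℂ := fun w : ℂ × ℂ =>
  ((a + w.2) / w.1, (a + (1 / a) * w.1 + w.2) / (w.1 * w.2))

lemma sqrt3_sq : ((Real.sqrt 3 : ℝ) : ℂ) ^ 2 = 3 := by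
  have h : (Real.sqrt 3) ^ 2 = 3 := Real.sq_sqrt (by norm_num)
  exact_mod_cast h

lemma cases_cube_one (a : ℂ) (h : a = 1 ∨ a = (-1 + Complex.I * Real.sqrt 3) / 2 ∨
    a = (-1 - Complex.I * Real.sqrt 3) / 2) : a ^ 3 = 1 := by
  have h3 := sqrt3_sq
  have hI := Complex.I_sq
  have hq : (Complex.I * Real.sqrt 3) ^ 2 = -3 := by rw [mul_pow, hI, h3]; norm_num
  set s := Complex.I * (Real.sqrt 3 : ℂ) with hs
  rcases h with h | h | h
  · rw [h]; norm_num
  · rw [h]; linear_combination (s - 3) / 8 * hq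
  · rw [h]; linear_combination (-s - 3) / 8 * hq

lemma cube_one_cases (a : ℂ) (h : a ^ 3 = 1) : a = 1 ∨ a = (-1 + Complex.I * Real.sqrt 3) / 2 ∨
    a = (-1 - Complex.I * Real.sqrt 3) / 2 := by
  have h3 := sqrt3_sq
  have hI := Complex.I_sq
  have hq : (Complex.I * Real.sqrt 3) ^ 2 = -3 := by rw [mul_pow, hI, h3]; norm_num
  set s := Complex.I * (Real.sqrt 3 : ℂ) with hs
  have : (a - 1) * ((a - (-1 + s) / 2) * (a - (-1 - s) / 2)) = 0 := by
    linear_combination h - (a - 1) / 4 * hq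
  rcases mul_eq_zero.1 this with h | h
  · exact Or.inl (sub_eq_zero.1 h)
  · rcases mul_eq_zero.1 h with h | h
    · exact Or.inr (Or.inl (sub_eq_zero.1 h))
    · exact Or.inr (Or.inr (sub_eq_zero.1 h))

lemma conj_part (a : ℂ) (h : a = (-1 + Complex.I * Real.sqrt 3) / 2 ∨
    a = (-1 - Complex.I * Real.sqrt 3) / 2) : (starRingEnd ℂ) a = 1 / a := by
  have h1 := cases_cube_one a (Or.inr h)
  have ha : a ≠ 0 := by rintro rfl; norm_num at h1
  have hq : (Complex.I * Real.sqrt 3) ^ 2 = -3 := by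
    rw [mul_pow, Complex.I_sq, sqrt3_sq]; norm_num
  rw [eq_div_iff ha]
  rcases h with h | h
  · rw [h]
    simp only [map_div₀, map_add, map_neg, map_one, map_mul, Complex.conj_I, Complex.conj_ofReal,
      map_ofNat]
    linear_combination -1 / 4 * hq
  · rw [h]
    simp only [map_div₀, map_sub, map_neg, map_one, map_mul, Complex.conj_I, Complex.conj_ofReal,
      map_ofNat]
    linear_combination -1 / 4 * hq

lemma LyG_step (a x₁ x₂ x₃ x₄ : ℂ) (h1 : x₁ ≠ 0) (h2 : x₂ ≠ 0)
    (e3 : x₁ * x₃ = a + x₂) (e4 : x₂ * x₄ = 1 / a + x₃) : LyG a (x₁, x₂) = (x₃, x₄) := by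
  refine Prod.ext ?_ ?_
  · show (a + x₂) / x₁ = x₃
    rw [div_eq_iff h1]; linear_combination -e3
  · show (a + (1 / a) * x₁ + x₂) / (x₁ * x₂) = x₄
    rw [div_eq_iff (mul_ne_zero h1 h2)]; linear_combination -e3 - x₁ * e4

lemma if_part (a : ℂ) (h : a ^ 3 = 1) (z : ℂ × ℂ)
    (hz : ∀ i : ℕ, i < 5 → ((LyG a)^[i] z).1 ≠ 0 ∧ ((LyG a)^[i] z).2 ≠ 0) :
    (LyG a)^[5] z = z := by
  have ha : a ≠ 0 := by rintro rfl; norm_num at h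
  have hb : 1 / a = a ^ 2 := by rw [div_eq_iff ha]; linear_combination -h
  obtain ⟨x, y⟩ := z
  obtain ⟨hx, hy⟩ := hz 0 (by norm_num)
  have s1 : LyG a (x, y) = ((a + y) / x, (a + a ^ 2 * x + y) / (x * y)) := by
    simp only [LyG, hb]
  simp only [Function.iterate_zero, id] at hx hy
  have h1 := hz 1 (by norm_num)
  simp only [Function.iterate_succ, Function.iterate_zero, Function.comp, id] at h1
  rw [s1] at h1
  obtain ⟨h3, h4⟩ := h1
  have g3 : a + y ≠ 0 := fun e => h3 (by simp [e])
  have s2 : LyG a ((a + y) / x, (a + a ^ 2 * x + y) / (x * y)) = ((1 + a * x) / y, a ^ 2 * x) := by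
    apply LyG_step _ _ _ _ _ h3 h4
    · field_simp
      linear_combination 0 * h
    · rw [hb]; field_simp
      linear_combination (a * x + 1) * h
  have h2 := hz 2 (by norm_num)
  simp only [Function.iterate_succ, Function.iterate_zero, Function.comp, id] at h2
  rw [s1, s2] at h2
  obtain ⟨h5, h6⟩ := h2
  have s3 : LyG a ((1 + a * x) / y, a ^ 2 * x) = (a * y, a ^ 2 * (a + y) / x) := by
    apply LyG_step _ _ _ _ _ h5 h6
    · field_simp
    · rw [hb]; field_simp
      linear_combination (1) * h
  have h3' := hz 3 (by norm_num)
  simp only [Function.iterate_succ, Function.iterate_zero, Function.comp, id] at h3'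
  rw [s1, s2, s3] at h3'
  obtain ⟨h7, h8⟩ := h3'
  have s4 : LyG a (a * y, a ^ 2 * (a + y) / x)
      = (a * ((a + a ^ 2 * x + y) / (x * y)), a ^ 2 * ((1 + a * x) / y)) := by
    apply LyG_step _ _ _ _ _ h7 h8
    · field_simp
      linear_combination (x) * h
    · rw [hb]; field_simp
      linear_combination (a + y + a * x * y + a ^ 2 * x) * h
  have h4' := hz 4 (by norm_num)
  simp only [Function.iterate_succ, Function.iterate_zero, Function.comp, id] at h4'
  rw [s1, s2, s3, s4] at h4'
  obtain ⟨h9, h10⟩ := h4'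
  have s5 : LyG a (a * ((a + a ^ 2 * x + y) / (x * y)), a ^ 2 * ((1 + a * x) / y)) = (x, y) := by
    apply LyG_step _ _ _ _ _ h9 h10
    · field_simp
      linear_combination 0 * h
    · rw [hb]; field_simp
      linear_combination (x) * h
  simp only [Function.iterate_succ, Function.iterate_zero, Function.comp, id]
  rw [s1, s2, s3, s4, s5]

lemma exists_u (a b : ℂ) (ha : a ≠ 0) : ∃ u : ℂ, u ≠ 0 ∧ b + u ≠ 0 ∧ -a ^ 2 + b + u ≠ 0 ∧
    a * u * (b + u) + b - a ^ 2 ≠ 0 := by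
  have hf : ({0, -b, a ^ 2 - b} ∪ {u : ℂ | a * u * (b + u) + b - a ^ 2 = 0}).Finite := by
    refine Set.Finite.union (by simp) ?_
    let p : Polynomial ℂ := Polynomial.C a * Polynomial.X ^ 2 + Polynomial.C (a * b) * Polynomial.X
      + Polynomial.C (b - a ^ 2)
    have hp : p ≠ 0 := by
      intro h0
      have := Polynomial.natDegree_quadratic (a := a) (b := a * b) (c := b - a ^ 2) ha
      change p.natDegree = 2 at this
      rw [h0] at this
      simp at this
    refine (Polynomial.finite_setOfPred_isRoot hp).subset ?_
    intro u hu
    simp only [Set.mem_ofPred_eq] at hu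
    simp only [Set.mem_ofPred_eq, Polynomial.IsRoot, p, Polynomial.eval_add, Polynomial.eval_mul,
      Polynomial.eval_C, Polynomial.eval_pow, Polynomial.eval_X]
    linear_combination hu
  obtain ⟨u, hu⟩ := hf.infinite_compl.nonempty
  simp only [Set.mem_compl_iff, Set.mem_union, Set.mem_insert_iff, Set.mem_singleton_iff,
    Set.mem_ofPred_eq, not_or] at hu
  obtain ⟨⟨h1, h2, h3⟩, h4⟩ := hu
  exact ⟨u, h1, fun h => h2 (by linear_combination h), fun h => h3 (by linear_combination h), h4⟩

lemma only_if_part (a : ℂ) (ha : a ≠ 0)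
    (H : ∀ z : ℂ × ℂ, (∀ i : ℕ, i < 5 → ((LyG a)^[i] z).1 ≠ 0 ∧ ((LyG a)^[i] z).2 ≠ 0) →
      (LyG a)^[5] z = z) : a ^ 3 = 1 := by
  by_contra hne
  obtain ⟨b, hb⟩ : ∃ b, b = 1 / a := ⟨_, rfl⟩
  have hab : a * b = 1 := by rw [hb]; field_simp
  have hb0 : b ≠ 0 := right_ne_zero_of_mul_eq_one hab
  have hba : b - a ^ 2 ≠ 0 := fun h => hne (by linear_combination hab - a * h)
  obtain ⟨u, hu, hbu, h3, h1⟩ := exists_u a b ha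
  -- eventual nonvanishing
  have ev : ∀ f : ℂ → ℂ, Continuous f → f 0 ≠ 0 → ∀ᶠ t in nhdsWithin (0 : ℂ) {0}ᶜ, f t ≠ 0 :=
    fun f hf h0 => (hf.continuousAt.eventually_ne h0).filter_mono nhdsWithin_le_nhds
  have E0 : ∀ᶠ t in nhdsWithin (0 : ℂ) {0}ᶜ, t ≠ 0 := eventually_mem_nhdsWithin
  have E1 := ev (fun t => t - a) (by fun_prop) (by simpa using ha)
  have E2 := ev (fun t => b * u + t) (by fun_prop) (by simpa using ⟨hb0, hu⟩)
  have q : u * (b - a ^ 2) ≠ 0 := mul_ne_zero hu hba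
  have E3 := ev (fun t => a * u * (t - a) + b * u + t) (by fun_prop)
    (fun h => q (by linear_combination h))
  have E4 := ev (fun t => a * u * (t - a) + b * u + b * t ^ 2) (by fun_prop)
    (fun h => q (by linear_combination h))
  have E5 := ev (fun t => a * (t - a) + b + u) (by fun_prop)
    (fun h => h3 (by linear_combination h))
  have E6 := ev (fun t => b * u * (t - a) + a * (t - a) + b + u) (by fun_prop)
    (fun h => hba (by linear_combination h + u * hab))
  have E7 := ev (fun t => a * u * (b + u) + b * u * (t - a) + a * (t - a) + b + u) (by fun_prop)
    (fun h => h1 (by linear_combination h + u * hab))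
  have E8 := ev (fun t => (b * u * (t - a) + a * (t - a) + b + u) * (a * (t - a) + b + u)
      * (u * (a * u * (t - a) + b * u + b * t ^ 2))
      - t * (b * u + t) * u * (b * (b + u) * (a * (t - a) + b + u)
        + (a * u * (b + u) + b * u * (t - a) + a * (t - a) + b + u) * (t - a))) (by fun_prop)
    (fun h => mul_ne_zero (mul_ne_zero hba h3) (mul_ne_zero hu q) (by
      linear_combination h + u * (-a ^ 2 + b + u) * (u * (u * (b - a ^ 2))) * hab))
  obtain ⟨t, ht, k1, k2, k3, k4, k5, k6, k7, k8⟩ :=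
    (E0.and (E1.and (E2.and (E3.and (E4.and (E5.and (E6.and (E7.and E8)))))))).exists
  clear E0 E1 E2 E3 E4 E5 E6 E7 E8 ev
  obtain ⟨v, hv⟩ : ∃ v, v = t - a := ⟨_, rfl⟩
  rw [← hv] at k1 k3 k4 k5 k6 k7 k8
  have htv : t = a + v := by rw [hv]; ring
  obtain ⟨D2, hD2⟩ : ∃ D, D = b * u + t := ⟨_, rfl⟩
  obtain ⟨D3, hD3⟩ : ∃ D, D = a * u * v + b * u + t := ⟨_, rfl⟩
  obtain ⟨D4, hD4⟩ : ∃ D, D = a * u * v + b * u + b * t ^ 2 := ⟨_, rfl⟩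
  obtain ⟨D5, hD5⟩ : ∃ D, D = a * v + b + u := ⟨_, rfl⟩
  obtain ⟨D6, hD6⟩ : ∃ D, D = b * u * v + a * v + b + u := ⟨_, rfl⟩
  obtain ⟨D7, hD7⟩ : ∃ D, D = a * u * (b + u) + b * u * v + a * v + b + u := ⟨_, rfl⟩
  obtain ⟨D8, hD8⟩ : ∃ D, D = b + u := ⟨_, rfl⟩
  rw [← hD2] at k2
  rw [← hD3] at k3
  rw [← hD4] at k4
  rw [← hD5] at k5
  rw [← hD6] at k6
  rw [← hD7] at k7
  rw [← hD8] at hbu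
  rw [← hD2, ← hD4, ← hD5, ← hD6, ← hD7, ← hD8] at k8
  have n1 : D7 * v / (D8 * D5) ≠ 0 := by positivity
  have n2 : D6 / (u * D8) ≠ 0 := by positivity
  have n3 : D5 / (u * v) ≠ 0 := by positivity
  have n4 : D8 / v ≠ 0 := by positivity
  have n7 : t / u ≠ 0 := by positivity
  have n8 : D2 / (u * v) ≠ 0 := by positivity
  have n9 : D3 / (v * t) ≠ 0 := by positivity
  have n10 : u * D4 / (t * D2) ≠ 0 := by positivity
  have s1 : LyG a (D7 * v / (D8 * D5), D6 / (u * D8)) = (D5 / (u * v), D8 / v) := by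
    apply LyG_step _ _ _ _ _ n1 n2
    · field_simp
      rw [hD7, hD6, hD8]; ring
    · rw [← hb]; field_simp
      rw [hD6, hD5]; ring
  have s2 : LyG a (D5 / (u * v), D8 / v) = (u, v) := by
    apply LyG_step _ _ _ _ _ n3 n4
    · field_simp
      rw [hD5, hD8]; ring
    · rw [← hb]; field_simp
      rw [hD8]
  have s3 : LyG a (u, v) = (t / u, D2 / (u * v)) := by
    apply LyG_step _ _ _ _ _ hu k1
    · field_simp
      rw [htv]
    · rw [← hb]; field_simp
      rw [hD2]; ring
  have s4 : LyG a (t / u, D2 / (u * v)) = (D3 / (v * t), u * D4 / (t * D2)) := by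
    apply LyG_step _ _ _ _ _ n7 n8
    · field_simp
      rw [hD3, hD2]; ring
    · rw [← hb]; field_simp
      rw [hD4, hD3, hv]; linear_combination t * hab
  have hfix := H (D7 * v / (D8 * D5), D6 / (u * D8)) (by
    intro i hi
    interval_cases i <;> simp only [Function.iterate_succ, Function.iterate_zero, Function.comp, id]
    · exact ⟨n1, n2⟩
    · rw [s1]; exact ⟨n3, n4⟩
    · rw [s1, s2]; exact ⟨hu, k1⟩
    · rw [s1, s2, s3]; exact ⟨n7, n8⟩
    · rw [s1, s2, s3, s4]; exact ⟨n9, n10⟩)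
  simp only [Function.iterate_succ, Function.iterate_zero, Function.comp, id] at hfix
  rw [s1, s2, s3, s4] at hfix
  have f1 := congrArg Prod.fst hfix
  have f2 := congrArg Prod.snd hfix
  change (a + u * D4 / (t * D2)) / (D3 / (v * t)) = D7 * v / (D8 * D5) at f1
  change (a + (1 / a) * (D3 / (v * t)) + u * D4 / (t * D2)) / (D3 / (v * t) * (u * D4 / (t * D2)))
    = D6 / (u * D8) at f2
  rw [div_eq_iff n9] at f1
  rw [div_eq_iff (mul_ne_zero n9 n10), ← hb] at f2
  have f3 : b + D7 * v / (D8 * D5) = D6 / (u * D8) * (u * D4 / (t * D2)) := by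
    apply mul_right_cancel₀ n9
    linear_combination f2 - f1
  field_simp at f3
  apply k8
  first
    | linear_combination -f3
    | linear_combination f3
    | linear_combination -u * f3

/-- For `a ≠ 0` and `b = 1/a`, the composition Lyness map
`G_{1/a,a}(x,y) = ((a+y)/x, (a + x/a + y)/(xy))` satisfies `G_{1/a,a}^5 = Id`
(wherever defined) if and only if `a ∈ {1, (−1+i√3)/2, (−1−i√3)/2}`; in the
latter two cases `b = 1/a = ā`. -/
theorem stmt_18 :
    (∀ a : ℂ, a ≠ 0 →
      ((∀ z : ℂ × ℂ,
          (∀ i : ℕ, i < 5 →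
            ((fun w : ℂ × ℂ =>
                ((a + w.2) / w.1,
                  (a + (1 / a) * w.1 + w.2) / (w.1 * w.2)))^[i] z).1 ≠ 0 ∧
            ((fun w : ℂ × ℂ =>
                ((a + w.2) / w.1,
                  (a + (1 / a) * w.1 + w.2) / (w.1 * w.2)))^[i] z).2 ≠ 0) →
          (fun w : ℂ × ℂ =>
              ((a + w.2) / w.1,
                (a + (1 / a) * w.1 + w.2) / (w.1 * w.2)))^[5] z = z) ↔
        (a = 1 ∨ a = (-1 + Complex.I * Real.sqrt 3) / 2 ∨
          a = (-1 - Complex.I * Real.sqrt 3) / 2))) ∧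
    ∀ a : ℂ,
      (a = (-1 + Complex.I * Real.sqrt 3) / 2 ∨
        a = (-1 - Complex.I * Real.sqrt 3) / 2) →
      (starRingEnd ℂ) a = 1 / a := by
  refine ⟨fun a ha => ?_, conj_part⟩
  exact ⟨fun h => cube_one_cases a (only_if_part a ha h), fun h z hz => if_part a (cases_cube_one a h) z hz⟩
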